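/- Let (u, v) be a C² solution of the p-system on (−∞, t₀] × ℝ, 1-periodic in x. Then there cannot exist two characteristic curves x₁, x₂ : (−∞, t₀] → ℝ, with x₁ a characteristic of the first eigenvalue and x₂ a characteristic of the second eigenvalue, such that −u(t, x₁(t)) → +∞ and −u(t, x₂(t)) → +∞ as t → −∞ (i.e. both of class B₋). -/

import Mathlib

/-!
The function `q = qfun p` satisfies `q' = -√(-p')`, so `v - q(u)` and `v + q(u)` are Riemann
invariants: the first is constant along 1-characteristics, the second along 2-characteristics
(`riemann_invariant`). Since `√(-p')` is bounded below by a positive constant on `(-∞, -1]`,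
`q(w) → +∞` as `w → -∞` (`tendsto_qfun`), and as `t → -∞` the two curves separate with relative
speed bounded below. By the intermediate value theorem `x₁ - x₂` is therefore an integer at
arbitrarily negative times; at such a time periodicity makes `u` and `v` agree on both curves, and
the two invariants give `q(u) = (c₂ - c₁) / 2`, a fixed constant. This contradicts
`q(u(t, x₁ t)) → +∞`.
-/

/-- `q(w) = ∫_w^0 √(-p'(s)) ds`. -/
noncomputable def qfun (p : ℝ → ℝ) (w : ℝ) : ℝ :=
  ∫ s in w..(0:ℝ), Real.sqrt (-(deriv p s))

/-- `(u, v)` solves the p-system `u_t = -v_x`, `v_t = (p(u))_x` on the domain `D`. -/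
def PSystem (p : ℝ → ℝ) (u v : ℝ × ℝ → ℝ) (D : Set (ℝ × ℝ)) : Prop :=
  ∀ z ∈ D,
    deriv (fun s => u (s, z.2)) z.1 = -deriv (fun y => v (z.1, y)) z.2 ∧
    deriv (fun s => v (s, z.2)) z.1 = deriv (fun y => p (u (z.1, y))) z.2

lemma strictMono_deriv_p {p : ℝ → ℝ} (hconv : ∀ w : ℝ, 0 < deriv (deriv p) w) :
    StrictMono (deriv p) :=
  strictMono_of_deriv_pos hconv

lemma continuous_speed {p : ℝ → ℝ} (hp : ContDiff ℝ 2 p) :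
    Continuous (fun s => Real.sqrt (-(deriv p s))) :=
  (hp.continuous_deriv (by norm_num)).neg.sqrt

lemma hasDerivAt_qfun {p : ℝ → ℝ} (hp : ContDiff ℝ 2 p) (w : ℝ) :
    HasDerivAt (qfun p) (-Real.sqrt (-(deriv p w))) w := by
  have hc := continuous_speed hp
  exact intervalIntegral.integral_hasDerivAt_left (hc.intervalIntegrable _ _)
    (hc.stronglyMeasurableAtFilter _ _) hc.continuousAt

/-- By convexity the characteristic speed on `(-∞, -1]` is at least its value at `-1`. -/
lemma speed_ge {p : ℝ → ℝ} (hconv : ∀ w : ℝ, 0 < deriv (deriv p) w) {w : ℝ} (hw : w ≤ -1) :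
    Real.sqrt (-(deriv p (-1))) ≤ Real.sqrt (-(deriv p w)) :=
  Real.sqrt_le_sqrt (neg_le_neg ((strictMono_deriv_p hconv).monotone hw))

lemma speed_pos {p : ℝ → ℝ} (hconv : ∀ w : ℝ, 0 < deriv (deriv p) w) (hp'0 : deriv p 0 = 0) :
    0 < Real.sqrt (-(deriv p (-1))) := by
  have := strictMono_deriv_p hconv (show (-1 : ℝ) < 0 by norm_num)
  exact Real.sqrt_pos.2 (by linarith)

lemma tendsto_qfun {p : ℝ → ℝ} (hp : ContDiff ℝ 2 p) (hconv : ∀ w : ℝ, 0 < deriv (deriv p) w)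
    (hp'0 : deriv p 0 = 0) : Filter.Tendsto (qfun p) Filter.atBot Filter.atTop := by
  have hm := speed_pos hconv hp'0
  set m := Real.sqrt (-(deriv p (-1))) with hmdef
  have key : ∀ w ≤ (-1 : ℝ), qfun p (-1) + m * (-1 - w) ≤ qfun p w := by
    intro w hw
    have := (convex_Iic (-1 : ℝ)).image_sub_le_mul_sub_of_deriv_le (f := qfun p) (C := -m)
      (fun z _ => (hasDerivAt_qfun hp z).continuousAt.continuousWithinAt)
      (fun z _ => (hasDerivAt_qfun hp z).differentiableAt.differentiableWithinAt)
      (fun z hz => by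
        rw [(hasDerivAt_qfun hp z).deriv]
        exact neg_le_neg (speed_ge hconv (Set.mem_Iic.1 (interior_subset hz))))
      w hw (-1) (Set.mem_Iic.2 le_rfl) hw
    linarith
  refine Filter.tendsto_atTop_mono' _ ((Filter.eventually_le_atBot (-1)).mono key) ?_
  refine Filter.tendsto_atTop_add_const_left _ _ (Filter.Tendsto.const_mul_atTop hm ?_)
  exact Filter.tendsto_atTop_add_const_left _ _ Filter.tendsto_neg_atBot_atTop

/-- Chain rule along a curve `(t, x t)`, in terms of the partial derivatives of `f`. -/
lemma hasDerivAt_along {f : ℝ × ℝ → ℝ} {x : ℝ → ℝ} {t c : ℝ}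
    (hf : DifferentiableAt ℝ f (t, x t)) (hx : HasDerivAt x c t) :
    HasDerivAt (fun s => f (s, x s))
      (deriv (fun s => f (s, x t)) t + c * deriv (fun y => f (t, y)) (x t)) t := by
  have h1 : HasDerivAt (fun s => f (s, x t)) (fderiv ℝ f (t, x t) (1, 0)) t :=
    HasFDerivAt.comp_hasDerivAt (f := fun s => (s, x t)) t hf.hasFDerivAt
      ((hasDerivAt_id t).prodMk (hasDerivAt_const t (x t)))
  have h2 : HasDerivAt (fun y => f (t, y)) (fderiv ℝ f (t, x t) (0, 1)) (x t) :=
    HasFDerivAt.comp_hasDerivAt (f := fun y => (t, y)) (x t) hf.hasFDerivAt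
      ((hasDerivAt_const (x t) t).prodMk (hasDerivAt_id (x t)))
  have h3 : HasDerivAt (fun s => f (s, x s)) (fderiv ℝ f (t, x t) (1, c)) t :=
    HasFDerivAt.comp_hasDerivAt (f := fun s => (s, x s)) t hf.hasFDerivAt
      ((hasDerivAt_id t).prodMk hx)
  rw [h1.deriv, h2.deriv]
  have : ((1 : ℝ), c) = (1, 0) + c • ((0 : ℝ), (1 : ℝ)) := by simp
  rw [this, map_add, map_smul, smul_eq_mul] at h3
  exact h3

/-- Constancy of the Riemann invariant `v - ε q(u)` along a characteristic of speed
`ε √(-p'(u))`, treating both families `ε = ±1` together. Times are restricted to `t < t₀`, where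
`u` and `v` are differentiable in a full neighbourhood. -/
lemma riemann_invariant {p : ℝ → ℝ} (hp : ContDiff ℝ 2 p)
    (hconv : ∀ w : ℝ, 0 < deriv (deriv p) w) (hp'0 : deriv p 0 = 0)
    {t₀ : ℝ} {u v : ℝ × ℝ → ℝ}
    (hu : ContDiffOn ℝ 2 u {z : ℝ × ℝ | z.1 ≤ t₀})
    (hv : ContDiffOn ℝ 2 v {z : ℝ × ℝ | z.1 ≤ t₀})
    (hsys : PSystem p u v {z : ℝ × ℝ | z.1 ≤ t₀})
    {ε : ℝ} (hε : ε ^ 2 = 1) {x : ℝ → ℝ}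
    (hhyp : ∀ t, t ≤ t₀ → u (t, x t) < 0)
    (hchar : ∀ t, t ≤ t₀ → HasDerivAt x (ε * Real.sqrt (-(deriv p (u (t, x t))))) t) :
    ∃ c, ∀ t, t < t₀ → v (t, x t) - ε * qfun p (u (t, x t)) = c := by
  have hder : ∀ t ∈ Set.Iio t₀,
      HasDerivAt (fun t => v (t, x t) - ε * qfun p (u (t, x t))) 0 t := by
    intro t ht
    have ht : t < t₀ := ht
    have hnhds : {z : ℝ × ℝ | z.1 ≤ t₀} ∈ nhds (t, x t) :=
      Filter.mem_of_superset ((isOpen_lt continuous_fst continuous_const).mem_nhds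
        (show (t, x t).1 < t₀ from ht)) (fun z (hz : z.1 < t₀) => hz.le)
    have hud : DifferentiableAt ℝ u (t, x t) :=
      (hu.contDiffAt hnhds).differentiableAt (by norm_num)
    have hvd : DifferentiableAt ℝ v (t, x t) :=
      (hv.contDiffAt hnhds).differentiableAt (by norm_num)
    have hua := hasDerivAt_along hud (hchar t ht.le)
    have hva := hasDerivAt_along hvd (hchar t ht.le)
    obtain ⟨e1, e2⟩ := hsys (t, x t) ht.le
    simp only at e1 e2
    have hpu : deriv (fun y => p (u (t, y))) (x t)
        = deriv p (u (t, x t)) * deriv (fun y => u (t, y)) (x t) := by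
      have hu2 : DifferentiableAt ℝ (fun y => u (t, y)) (x t) :=
        DifferentiableAt.comp (f := fun y => (t, y)) (x t) hud (by fun_prop)
      exact ((hp.differentiable (by norm_num) _).hasDerivAt.comp (x t) hu2.hasDerivAt).deriv
    have hsq : Real.sqrt (-(deriv p (u (t, x t)))) ^ 2 = -(deriv p (u (t, x t))) := by
      have := strictMono_deriv_p hconv (hhyp t ht.le)
      exact Real.sq_sqrt (by linarith)
    rw [hpu] at e2
    rw [e1] at hua
    rw [e2] at hva
    have hq := (hasDerivAt_qfun hp (u (t, x t))).comp t hua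
    have := hva.sub (hq.const_mul ε)
    refine this.congr_deriv ?_
    set l := Real.sqrt (-(deriv p (u (t, x t))))
    set a := deriv (fun y => u (t, y)) (x t)
    have h' : deriv p (u (t, x t)) = -l ^ 2 := by linarith
    rw [h']
    linear_combination (l ^ 2 * a) * hε
  refine ⟨v (t₀ - 1, x (t₀ - 1)) - ε * qfun p (u (t₀ - 1, x (t₀ - 1))), fun t ht => ?_⟩
  exact isOpen_Iio.is_const_of_deriv_eq_zero isPreconnected_Iio
    (fun s hs => (hder s hs).differentiableAt.differentiableWithinAt)
    (fun s hs => (hder s hs).deriv) ht (show t₀ - 1 < t₀ by linarith)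

/-- Lemma 2.2, backward time: for a `C²` solution of the p-system on `(-∞,t₀] × ℝ`,
1-periodic in `x`, there cannot exist a characteristic `x₁` of the first eigenvalue
`λ₁(u) = √(-p'(u))` and a characteristic `x₂` of the second eigenvalue
`λ₂(u) = -√(-p'(u))`, both defined on `(-∞, t₀]` and both of class `B₋`, i.e. with
`-u(t, xᵢ(t)) → +∞` as `t → -∞`. -/
theorem psystem_no_two_Bminus_characteristics
    (p : ℝ → ℝ) (hp : ContDiff ℝ 2 p) (hconv : ∀ w : ℝ, 0 < deriv (deriv p) w)
    (hp0 : p 0 = 0) (hp'0 : deriv p 0 = 0)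
    (t₀ : ℝ) (u v : ℝ × ℝ → ℝ)
    (hu : ContDiffOn ℝ 2 u {z : ℝ × ℝ | z.1 ≤ t₀})
    (hv : ContDiffOn ℝ 2 v {z : ℝ × ℝ | z.1 ≤ t₀})
    (hsys : PSystem p u v {z : ℝ × ℝ | z.1 ≤ t₀})
    (huper : ∀ t x : ℝ, u (t, x + 1) = u (t, x))
    (hvper : ∀ t x : ℝ, v (t, x + 1) = v (t, x))
    (x₁ x₂ : ℝ → ℝ)
    (hhyp₁ : ∀ t, t ≤ t₀ → u (t, x₁ t) < 0)
    (hhyp₂ : ∀ t, t ≤ t₀ → u (t, x₂ t) < 0)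
    (hchar₁ : ∀ t, t ≤ t₀ →
      HasDerivAt x₁ (Real.sqrt (-(deriv p (u (t, x₁ t))))) t)
    (hchar₂ : ∀ t, t ≤ t₀ →
      HasDerivAt x₂ (-Real.sqrt (-(deriv p (u (t, x₂ t))))) t)
    (hB₁ : Filter.Tendsto (fun t => -u (t, x₁ t)) Filter.atBot Filter.atTop)
    (hB₂ : Filter.Tendsto (fun t => -u (t, x₂ t)) Filter.atBot Filter.atTop) :
    False := by
  obtain ⟨c₁, hc₁⟩ := riemann_invariant hp hconv hp'0 hu hv hsys (ε := 1) (by norm_num) hhyp₁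
    (by simpa using hchar₁)
  obtain ⟨c₂, hc₂⟩ := riemann_invariant hp hconv hp'0 hu hv hsys (ε := -1) (by norm_num) hhyp₂
    (by simpa using hchar₂)
  have hm := speed_pos hconv hp'0
  set m := Real.sqrt (-(deriv p (-1))) with hmdef
  have hq : Filter.Tendsto (fun t => qfun p (u (t, x₁ t))) Filter.atBot Filter.atTop :=
    (tendsto_qfun hp hconv hp'0).comp (Filter.tendsto_neg_atTop_iff.1 hB₁)
  have hev := ((hB₁.eventually_ge_atTop 1).and (hB₂.eventually_ge_atTop 1)).and
    ((hq.eventually_gt_atTop ((c₂ - c₁) / 2)).and (Filter.eventually_lt_atBot t₀))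
  obtain ⟨T, hT⟩ := Filter.eventually_atBot.1 hev
  have hd : ∀ t ≤ T, HasDerivAt (fun t => x₁ t - x₂ t)
      (Real.sqrt (-(deriv p (u (t, x₁ t)))) - -Real.sqrt (-(deriv p (u (t, x₂ t))))) t :=
    fun t ht => (hchar₁ t (hT t ht).2.2.le).sub (hchar₂ t (hT t ht).2.2.le)
  -- On a time interval of length `1 / m` the gap `x₁ - x₂` grows by at least `2`, hence passes
  -- through an integer.
  have hmT : T - 1 / m ≤ T := by
    have : 0 < 1 / m := by positivity
    linarith
  have hgap := (convex_Iic T).mul_sub_le_image_sub_of_le_deriv (f := fun t => x₁ t - x₂ t)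
    (C := 2 * m)
    (fun z hz => (hd z hz).continuousAt.continuousWithinAt)
    (fun z hz => (hd z (Set.mem_Iic.1 (interior_subset hz))).differentiableAt.differentiableWithinAt)
    (fun z hz => by
      have hz : z ≤ T := Set.mem_Iic.1 (interior_subset hz)
      rw [(hd z hz).deriv]
      have h1 := speed_ge hconv (w := u (z, x₁ z)) (by linarith [(hT z hz).1.1])
      have h2 := speed_ge hconv (w := u (z, x₂ z)) (by linarith [(hT z hz).1.2])
      linarith)
    (T - 1 / m) hmT T (Set.mem_Iic.2 le_rfl) hmT
  have h2 : 2 * m * (T - (T - 1 / m)) = 2 := by field_simp; ring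
  rw [h2] at hgap
  obtain ⟨s, hs, hsn⟩ := intermediate_value_Icc hmT
    (fun z hz => (hd z hz.2).continuousAt.continuousWithinAt)
    (show ((⌊x₁ T - x₂ T⌋ : ℤ) : ℝ) ∈ _ from
      ⟨by linarith [Int.lt_floor_add_one (x₁ T - x₂ T)], Int.floor_le _⟩)
  simp only at hsn
  have hx : x₁ s = x₂ s + (⌊x₁ T - x₂ T⌋ : ℤ) * (1 : ℝ) := by linarith
  have hus : u (s, x₁ s) = u (s, x₂ s) := by
    rw [hx]
    exact (show Function.Periodic (fun y => u (s, y)) 1 from huper s).int_mul _ _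
  have hvs : v (s, x₁ s) = v (s, x₂ s) := by
    rw [hx]
    exact (show Function.Periodic (fun y => v (s, y)) 1 from hvper s).int_mul _ _
  obtain ⟨-, hqs, hst⟩ := hT s hs.2
  have e1 := hc₁ s hst
  have e2 := hc₂ s hst
  rw [← hus, ← hvs] at e2
  linarith
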